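/- Let consistent row sums r₁ ≥ … ≥ r_m and column sums c₁ ≥ … ≥ c_n be given (i.e., at least one finite F ⊆ ℤ² with these line sums exists), set v_j = #{l : r_l ≥ j} and α = (1/2)Σ_j |c_j − v_j|, and assume the line sums do not uniquely determine a set (α ≥ 1). Then there exist two finite sets F₂ and F₃, each with row sums (r_i) and column sums (c_j), such that |F₂ △ F₃| ≥ 2α + 2. -/

import Mathlib

/-!
Write a pair of solutions as 0/1 matrices `A`, `B` and put `M = A + B`, with entries in `{0, 1, 2}`.
The symmetric difference of the two solutions is the set of cells where `M = 1`, so its size is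
`ones M = ∑ M (2 - M)`. Choose the pair with `ones M` maximal.

*Exchange* (`Opt.exchange`). If row `i` lies above row `i'` but `M i j < M i' j`, then some column
`j'` has `M i j' > M i' j'`, and shifting a unit around the rectangle `{i, i'} × {j, j'}` gives the
sum of another pair of solutions. It changes `ones` by twice the total excess over 1 of the two
gaps; hence in an optimal `M` both gaps are exactly 1 and the shifted matrix is again optimal.
In particular no column of `M` has a 0 above a 2.

*Lower bound* (`dist_le`, `two_dist_row_le`, `two_dist_col_le`). So there are heights `g j` such
that column `j` has entries at least 1 in its first `g j` rows and at most 1 below; let `G` be the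
set of cells above these heights. Every `M i j - 2 [G i j]` is `0` or `±1`, and is nonzero exactly
where `M = 1`. Therefore the `L¹` distances from `2 r` and `2 c` to twice the line sums of `G` are
at most `ones M`. Conjugation does not increase `L¹` distances and is an involution on antitone
sequences, which gives `2 α ≤ ∑ |c - g| + ∑ |r - conj g| ≤ ones M`.

*Strictness* (`Opt.false_of_tight`). If `ones M = 2 α`, then for every admissible `g`
no row contains 1s both inside and outside `G`. The number of 1s in a row is even, so a 1 just below
a height could be moved across it and break this; hence each 1 inside `G` has a 2 below it and each
1 outside has a 0 above it. Exchanging at an extremal 1 then produces an optimal matrix with a 0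
above a 2. Finally `ones M` is even, so `ones M > 2 α` gives `ones M ≥ 2 α + 2`.
-/

open Finset

/-- Number of elements of `F` in row `i`. -/
def rowSum (F : Finset (ℤ × ℤ)) (i : ℤ) : ℕ := (F.filter fun p => p.1 = i).card

/-- Number of elements of `F` in column `j`. -/
def colSum (F : Finset (ℤ × ℤ)) (j : ℤ) : ℕ := (F.filter fun p => p.2 = j).card

/-- `F` has row sums `r` on rows `1..m`, column sums `c` on columns `1..n`,
and zero line sums elsewhere. -/
def hasLineSums (F : Finset (ℤ × ℤ)) (m n : ℕ) (r : Fin m → ℕ) (c : Fin n → ℕ) : Prop :=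
  (∀ i : Fin m, rowSum F ((i : ℤ) + 1) = r i) ∧
  (∀ i : ℤ, (∀ k : Fin m, (k : ℤ) + 1 ≠ i) → rowSum F i = 0) ∧
  (∀ j : Fin n, colSum F ((j : ℤ) + 1) = c j) ∧
  (∀ j : ℤ, (∀ k : Fin n, (k : ℤ) + 1 ≠ j) → colSum F j = 0)

/-- The conjugate partition: `conj m r j = #{l : r l ≥ j}`. -/
def conj (m : ℕ) (r : Fin m → ℕ) (j : ℕ) : ℕ := (Finset.univ.filter fun l => j ≤ r l).card

/-! ### Conjugates and `L¹` distances -/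

lemma sum_abs_layer (a b n : ℕ) :
    ∑ j ∈ Finset.range n, |((if j + 1 ≤ a then 1 else 0 : ℤ) - (if j + 1 ≤ b then 1 else 0))|
      = |(min a n : ℕ) - ((min b n : ℕ) : ℤ)| := by
  induction n with
  | zero => simp
  | succ n ih =>
    rw [Finset.sum_range_succ, ih]
    split_ifs <;> simp only [Int.abs_eq_natAbs] <;> omega

/-- Conjugation does not increase the `L¹` distance. -/
lemma conj_contract (m n : ℕ) (a b : Fin m → ℕ) :
    ∑ j : Fin n, |(conj m a ((j : ℕ) + 1) : ℤ) - conj m b ((j : ℕ) + 1)|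
      ≤ ∑ i, |(a i : ℤ) - b i| := by
  have h1 : ∀ j : Fin n, |(conj m a ((j : ℕ) + 1) : ℤ) - conj m b ((j : ℕ) + 1)| ≤
      ∑ i, |((if (j : ℕ) + 1 ≤ a i then 1 else 0 : ℤ) - (if (j : ℕ) + 1 ≤ b i then 1 else 0))| := by
    intro j
    have : (conj m a ((j : ℕ) + 1) : ℤ) - conj m b ((j : ℕ) + 1) =
      ∑ i, ((if (j : ℕ) + 1 ≤ a i then 1 else 0 : ℤ) - (if (j : ℕ) + 1 ≤ b i then 1 else 0)) := by
      simp [conj, Finset.sum_sub_distrib]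
    rw [this]
    exact Finset.abs_sum_le_sum_abs _ _
  refine (Finset.sum_le_sum fun j _ => h1 j).trans ?_
  rw [Finset.sum_comm]
  refine Finset.sum_le_sum fun i _ => ?_
  rw [Fin.sum_univ_eq_sum_range (fun j => |((if j + 1 ≤ a i then 1 else 0 : ℤ) -
    (if j + 1 ≤ b i then 1 else 0))|) n, sum_abs_layer]
  rw [abs_le]
  constructor <;> cases abs_cases ((a i : ℤ) - b i) <;> omega

lemma conj_conj (m n : ℕ) (c : Fin n → ℕ) (hc : Antitone c) (hm : ∀ j, c j ≤ m) (j : Fin n) :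
    conj m (fun i => conj n c ((i : ℕ) + 1)) ((j : ℕ) + 1) = c j := by
  have key : ∀ i : Fin m, (j : ℕ) + 1 ≤ conj n c ((i : ℕ) + 1) ↔ (i : ℕ) < c j := by
    intro i
    unfold conj
    constructor
    · intro h
      by_contra hlt
      have : (Finset.univ.filter fun l => (i : ℕ) + 1 ≤ c l) ⊆ Finset.Iio j := by
        intro l hl
        simp only [Finset.mem_filter, Finset.mem_univ, true_and, Finset.mem_Iio] at hl ⊢
        by_contra hjl
        have := hc (not_lt.mp hjl)
        omega
      have := Finset.card_le_card this
      rw [Fin.card_Iio] at this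
      omega
    · intro h
      have : Finset.Iic j ⊆ (Finset.univ.filter fun l => (i : ℕ) + 1 ≤ c l) := by
        intro l hl
        simp only [Finset.mem_filter, Finset.mem_univ, true_and, Finset.mem_Iic] at hl ⊢
        have := hc hl
        omega
      have := Finset.card_le_card this
      rwa [Fin.card_Iic] at this
  rw [conj]
  simp only [key]
  rw [Fin.card_filter_val_lt]
  exact min_eq_right (hm j)

/-- The `L¹` distance from `c` to the conjugate of `r`, bounded through arbitrary column heights
`g`, whose own row lengths are `conj n g`. -/
lemma dist_le (m n : ℕ) (r : Fin m → ℕ) (c : Fin n → ℕ) (hc : Antitone c) (hm : ∀ j, c j ≤ m)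
    (g : Fin n → ℕ) :
    ∑ j : Fin n, |(c j : ℤ) - conj m r ((j : ℕ) + 1)| ≤
      ∑ j, |(c j : ℤ) - g j| + ∑ i : Fin m, |(r i : ℤ) - conj n g ((i : ℕ) + 1)| := by
  have h1 := conj_contract m n (fun i => conj n c ((i : ℕ) + 1)) r
  simp only [conj_conj m n c hc hm] at h1
  have h2 := conj_contract n m c g
  have h3 : ∑ i : Fin m, |(conj n c ((i : ℕ) + 1) : ℤ) - r i| ≤
      ∑ i : Fin m, |(conj n c ((i : ℕ) + 1) : ℤ) - conj n g ((i : ℕ) + 1)| +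
      ∑ i : Fin m, |(r i : ℤ) - conj n g ((i : ℕ) + 1)| := by
    rw [← Finset.sum_add_distrib]
    refine Finset.sum_le_sum fun i _ => ?_
    rw [abs_sub_comm (r i : ℤ)]
    exact abs_sub_le _ _ _
  linarith

/-! ### Exchanges -/

/-- `A` is a 0/1 matrix with row sums `r` and column sums `c`. -/
structure Sol {m n : ℕ} (r : Fin m → ℕ) (c : Fin n → ℕ) (A : Fin m → Fin n → ℤ) : Prop where
  entry : ∀ x y, A x y = 0 ∨ A x y = 1
  row : ∀ x, ∑ y, A x y = r x
  col : ∀ y, ∑ x, A x y = c y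

/-- The unit shift around a rectangle: `+1` at `(i, j)` and `(i', j')`, `-1` at `(i', j)` and
`(i, j')`, and `0` elsewhere. -/
def shift {m n : ℕ} (i i' : Fin m) (j j' : Fin n) (x : Fin m) (y : Fin n) : ℤ :=
  ((if x = i then 1 else 0) - (if x = i' then 1 else 0)) *
    ((if y = j then 1 else 0) - (if y = j' then 1 else 0))

/-- The number of entries equal to 1, for a matrix with entries in `{0, 1, 2}`. -/
def ones {m n : ℕ} (M : Fin m → Fin n → ℤ) : ℤ := ∑ x, ∑ y, M x y * (2 - M x y)

variable {m n : ℕ} {r : Fin m → ℕ} {c : Fin n → ℕ}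

lemma shift_row (i i' : Fin m) (j j' : Fin n) (x : Fin m) : ∑ y, shift i i' j j' x y = 0 := by
  simp [shift, ← Finset.mul_sum, Finset.sum_sub_distrib]

lemma shift_col (i i' : Fin m) (j j' : Fin n) (y : Fin n) : ∑ x, shift i i' j j' x y = 0 := by
  simp [shift, ← Finset.sum_mul, Finset.sum_sub_distrib]

lemma Sol.shift {A : Fin m → Fin n → ℤ} (hA : Sol r c A) {i i' : Fin m} {j j' : Fin n}
    (h1 : A i j = 0) (h2 : A i' j = 1) (h3 : A i j' = 1) (h4 : A i' j' = 0) :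
    Sol r c (fun x y => A x y + shift i i' j j' x y) := by
  refine ⟨fun x y => ?_, fun x => ?_, fun y => ?_⟩
  · have hi : i ≠ i' := by rintro rfl; omega
    have hj : j ≠ j' := by rintro rfl; omega
    have := hA.entry x y
    simp only [_root_.shift]
    by_cases a : x = i
    · subst a
      by_cases b : y = j
      · subst b; simp [hi, hj, h1]
      · by_cases b' : y = j'
        · subst b'; simp [hi, hj.symm, h3]
        · simpa [b, b'] using this
    · by_cases a' : x = i'
      · subst a'
        by_cases b : y = j
        · subst b; simp [hi.symm, hj, h2]
        · by_cases b' : y = j'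
          · subst b'; simp [hi.symm, hj.symm, h4]
          · simpa [b, b'] using this
      · simpa [a, a'] using this
  · rw [Finset.sum_add_distrib, shift_row, hA.row, add_zero]
  · rw [Finset.sum_add_distrib, shift_col, hA.col, add_zero]

lemma sum_mul_shift (f : Fin m → Fin n → ℤ) (i i' : Fin m) (j j' : Fin n) :
    ∑ x, ∑ y, f x y * shift i i' j j' x y = f i j - f i' j - f i j' + f i' j' := by
  have : ∀ x, ∑ y, f x y * shift i i' j j' x y =
      ((if x = i then 1 else 0) - (if x = i' then 1 else 0)) * (f x j - f x j') := by
    intro x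
    simp only [shift]
    rw [← Fintype.sum_ite_eq' j (fun y => f x y), ← Fintype.sum_ite_eq' j' (fun y => f x y),
      ← Finset.sum_sub_distrib, Finset.mul_sum]
    refine Finset.sum_congr rfl fun y _ => ?_
    split_ifs <;> ring
  simp only [this, sub_mul, Finset.sum_sub_distrib, ite_mul, one_mul, zero_mul,
    Finset.sum_ite_eq', Finset.mem_univ, if_true]
  ring

lemma ones_shift (M : Fin m → Fin n → ℤ) {i i' : Fin m} {j j' : Fin n} (hi : i ≠ i')
    (hj : j ≠ j') :
    ones (fun x y => M x y + shift i i' j j' x y) =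
      ones M + 2 * ((M i' j - M i j) + (M i j' - M i' j') - 2) := by
  have h : ∀ x y, (M x y + shift i i' j j' x y) * (2 - (M x y + shift i i' j j' x y)) =
      M x y * (2 - M x y) + (2 - 2 * M x y - shift i i' j j' x y) * shift i i' j j' x y := by
    intro x y; ring
  unfold ones
  simp only [h, Finset.sum_add_distrib]
  rw [sum_mul_shift (fun x y => 2 - 2 * M x y - shift i i' j j' x y)]
  simp [shift, hi, hi.symm, hj, hj.symm]
  ring

lemma exists_gt_of_sum_le {f g : Fin n → ℤ} (h : ∑ y, g y ≤ ∑ y, f y) {j : Fin n}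
    (hj : f j < g j) : ∃ y, g y < f y := by
  by_contra! hn
  exact absurd (Finset.sum_lt_sum (fun y _ => hn y) ⟨j, Finset.mem_univ j, hj⟩) (not_lt.mpr h)

/-- A shift of the sum of two solutions, starting from a column where the first solution already
has the pattern to be reversed. If no column allows the shift within a single solution, an
intermediate column `y₁` is used: the two shifts through it add up to one. -/
lemma exists_shift_aux {A B : Fin m → Fin n → ℤ} (hA : Sol r c A) (hB : Sol r c B)
    {i i' : Fin m} {j : Fin n} (hr : r i' ≤ r i)
    (hM : A i j + B i j < A i' j + B i' j) (h0 : A i j = 0) (h1 : A i' j = 1) :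
    ∃ j' A' B', A i' j' + B i' j' < A i j' + B i j' ∧ Sol r c A' ∧ Sol r c B' ∧
      ∀ x y, A' x y + B' x y = A x y + B x y + shift i i' j j' x y := by
  have hr' : (r i' : ℤ) ≤ r i := by exact_mod_cast hr
  obtain ⟨y₁, hy₁⟩ := exists_gt_of_sum_le (f := A i) (g := A i') (j := j)
    (by rw [hA.row, hA.row]; exact hr') (by omega)
  have a1 := hA.entry i y₁
  have a2 := hA.entry i' y₁
  have b1 := hB.entry i y₁
  have b2 := hB.entry i' y₁
  by_cases hb : B i' y₁ ≤ B i y₁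
  · exact ⟨y₁, _, B, by omega, hA.shift h0 h1 (j' := y₁) (by omega) (by omega), hB, fun x y => by ring⟩
  obtain ⟨y₂, hy₂⟩ := exists_gt_of_sum_le (f := fun y => A i y + B i y)
    (g := fun y => A i' y + B i' y) (j := j)
    (by simp only [Finset.sum_add_distrib, hA.row, hB.row]; omega) hM
  have a1' := hA.entry i y₂
  have a2' := hA.entry i' y₂
  have b1' := hB.entry i y₂
  have b2' := hB.entry i' y₂
  by_cases ha : A i' y₂ < A i y₂
  · exact ⟨y₂, _, B, hy₂, hA.shift h0 h1 (j' := y₂) (by omega) (by omega), hB, fun x y => by ring⟩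
  refine ⟨y₂, _, _, hy₂, hA.shift h0 h1 (j' := y₁) (by omega) (by omega),
    hB.shift (i := i) (i' := i') (j := y₁) (j' := y₂) (by omega) (by omega) (by omega) (by omega),
    fun x y => ?_⟩
  simp only [shift]
  ring

lemma exists_shift {A B : Fin m → Fin n → ℤ} (hA : Sol r c A) (hB : Sol r c B)
    {i i' : Fin m} {j : Fin n} (hr : r i' ≤ r i)
    (hM : A i j + B i j < A i' j + B i' j) :
    ∃ j' A' B', A i' j' + B i' j' < A i j' + B i j' ∧ Sol r c A' ∧ Sol r c B' ∧
      ∀ x y, A' x y + B' x y = A x y + B x y + shift i i' j j' x y := by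
  have a1 := hA.entry i j
  have a2 := hA.entry i' j
  have b1 := hB.entry i j
  have b2 := hB.entry i' j
  by_cases h : A i j < A i' j
  · exact exists_shift_aux hA hB hr hM (by omega) (by omega)
  · obtain ⟨j', B', A', h1, h2, h3, h4⟩ :=
      exists_shift_aux hB hA hr (by omega : B i j + A i j < B i' j + A i' j) (by omega) (by omega)
    exact ⟨j', A', B', by omega, h3, h2, fun x y => by have := h4 x y; omega⟩

/-- `M` is the sum of two solutions whose symmetric difference is as large as possible. -/
def Opt (r : Fin m → ℕ) (c : Fin n → ℕ) (M : Fin m → Fin n → ℤ) : Prop :=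
  (∃ A B, Sol r c A ∧ Sol r c B ∧ M = fun x y => A x y + B x y) ∧
  ∀ A B, Sol r c A → Sol r c B → ones (fun x y => A x y + B x y) ≤ ones M

lemma Opt.entry {M : Fin m → Fin n → ℤ} (h : Opt r c M) (x : Fin m) (y : Fin n) :
    M x y = 0 ∨ M x y = 1 ∨ M x y = 2 := by
  obtain ⟨⟨A, B, hA, hB, rfl⟩, -⟩ := h
  have := hA.entry x y
  have := hB.entry x y
  dsimp only
  omega

lemma Opt.row {M : Fin m → Fin n → ℤ} (h : Opt r c M) (x : Fin m) : ∑ y, M x y = 2 * r x := by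
  obtain ⟨⟨A, B, hA, hB, rfl⟩, -⟩ := h
  simp only [Finset.sum_add_distrib, hA.row, hB.row]
  ring

lemma Opt.col {M : Fin m → Fin n → ℤ} (h : Opt r c M) (y : Fin n) : ∑ x, M x y = 2 * c y := by
  obtain ⟨⟨A, B, hA, hB, rfl⟩, -⟩ := h
  simp only [Finset.sum_add_distrib, hA.col, hB.col]
  ring

lemma Opt.exchange {M : Fin m → Fin n → ℤ} (h : Opt r c M) {i i' : Fin m} {j : Fin n}
    (hr : r i' ≤ r i) (hM : M i j < M i' j) :
    M i' j = M i j + 1 ∧ ∃ j', M i j' = M i' j' + 1 ∧ j ≠ j' ∧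
      Opt r c (fun x y => M x y + shift i i' j j' x y) := by
  obtain ⟨⟨A, B, hA, hB, hMe⟩, hmax⟩ := h
  have hMe' : ∀ x y, M x y = A x y + B x y := fun x y => by rw [hMe]
  obtain ⟨j', A', B', h1, hA', hB', h4⟩ := exists_shift hA hB hr (by simpa [hMe'] using hM)
  rw [← hMe', ← hMe'] at h1
  simp only [← hMe'] at h4
  have hi : i ≠ i' := by rintro rfl; omega
  have hj : j ≠ j' := by rintro rfl; omega
  have hle := hmax A' B' hA' hB'
  simp only [h4] at hle
  have hs := ones_shift M hi hj
  refine ⟨by omega, j', by omega, hj, ⟨A', B', hA', hB', ?_⟩, fun A B hA hB => ?_⟩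
  · funext x y; exact (h4 x y).symm
  · have := hmax A B hA hB
    omega

/-- No column of an optimal matrix has a 0 above a 2. -/
lemma Opt.not_zero_two {M : Fin m → Fin n → ℤ} (h : Opt r c M) (hr : Antitone r)
    {i i' : Fin m} (hi : i < i') {j : Fin n} (h0 : M i j = 0) (h2 : M i' j = 2) : False := by
  have := (h.exchange (j := j) (hr hi.le) (by omega)).1
  omega

/-! ### Admissible heights and the strict bound -/

/-- The heights `g` separate the entries of `M`: in each column `j` the entries are at least 1 in
the first `g j` rows and at most 1 below. -/
def Adm (M : Fin m → Fin n → ℤ) (g : Fin n → ℕ) : Prop :=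
  ∀ (i : Fin m) (j : Fin n), ((i : ℕ) < g j → 1 ≤ M i j) ∧ (g j ≤ (i : ℕ) → M i j ≤ 1)

lemma abs_cell {M : Fin m → Fin n → ℤ} (hM : ∀ x y, M x y = 0 ∨ M x y = 1 ∨ M x y = 2)
    {g : Fin n → ℕ} (hg : Adm M g) (i : Fin m) (j : Fin n) :
    |M i j - 2 * (if (i : ℕ) < g j then 1 else 0)| = M i j * (2 - M i j) := by
  have h1 := hg i j
  rcases hM i j with h | h | h <;> split_ifs with hh <;> simp [h] at h1 ⊢ <;> omega

lemma row_diff {M : Fin m → Fin n → ℤ} (h : Opt r c M) (g : Fin n → ℕ) (i : Fin m) :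
    2 * ((r i : ℤ) - conj n g ((i : ℕ) + 1)) =
      ∑ j, (M i j - 2 * (if (i : ℕ) < g j then 1 else 0)) := by
  rw [Finset.sum_sub_distrib, h.row, ← Finset.mul_sum]
  simp [conj]
  ring

lemma col_diff {M : Fin m → Fin n → ℤ} (h : Opt r c M) (g : Fin n → ℕ) (hgm : ∀ j, g j ≤ m)
    (j : Fin n) :
    2 * ((c j : ℤ) - g j) =
      ∑ i : Fin m, (M i j - 2 * (if (i : ℕ) < g j then 1 else 0)) := by
  rw [Finset.sum_sub_distrib, h.col, ← Finset.mul_sum]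
  simp [Fin.card_filter_val_lt, hgm j]
  ring

lemma abs_row_le {M : Fin m → Fin n → ℤ} (h : Opt r c M) {g : Fin n → ℕ} (hg : Adm M g)
    (i : Fin m) :
    2 * |(r i : ℤ) - conj n g ((i : ℕ) + 1)| ≤ ∑ j, M i j * (2 - M i j) := by
  have h2 : |(2 : ℤ)| = 2 := rfl
  rw [← h2, ← abs_mul, row_diff h g i]
  refine (Finset.abs_sum_le_sum_abs _ _).trans (le_of_eq ?_)
  rw [h2]
  exact Finset.sum_congr rfl fun j _ => abs_cell h.entry hg i j

lemma two_dist_row_le {M : Fin m → Fin n → ℤ} (h : Opt r c M) {g : Fin n → ℕ} (hg : Adm M g) :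
    2 * ∑ i : Fin m, |(r i : ℤ) - conj n g ((i : ℕ) + 1)| ≤ ones M := by
  rw [Finset.mul_sum]
  exact Finset.sum_le_sum fun i _ => abs_row_le h hg i

lemma two_dist_col_le {M : Fin m → Fin n → ℤ} (h : Opt r c M) {g : Fin n → ℕ} (hg : Adm M g)
    (hgm : ∀ j, g j ≤ m) :
    2 * ∑ j, |(c j : ℤ) - g j| ≤ ones M := by
  unfold ones
  rw [Finset.mul_sum, Finset.sum_comm]
  refine Finset.sum_le_sum fun j _ => ?_
  have h2 : |(2 : ℤ)| = 2 := rfl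
  rw [← h2, ← abs_mul, col_diff h g hgm j]
  refine (Finset.abs_sum_le_sum_abs _ _).trans (le_of_eq ?_)
  rw [h2]
  exact Finset.sum_congr rfl fun i _ => abs_cell h.entry hg i j

/-- A row with a 1 on either side of the heights loses in the triangle inequality. -/
lemma two_dist_row_lt {M : Fin m → Fin n → ℤ} (h : Opt r c M) {g : Fin n → ℕ} (hg : Adm M g)
    {i : Fin m} {j j' : Fin n} (hj : M i j = 1) (hj' : M i j' = 1) (hlt : (i : ℕ) < g j)
    (hge : g j' ≤ (i : ℕ)) :
    2 * ∑ i : Fin m, |(r i : ℤ) - conj n g ((i : ℕ) + 1)| < ones M := by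
  rw [Finset.mul_sum]
  refine Finset.sum_lt_sum (fun i _ => abs_row_le h hg i) ⟨i, Finset.mem_univ i, ?_⟩
  have h2 : |(2 : ℤ)| = 2 := rfl
  rw [← h2, ← abs_mul, row_diff h g i, h2, abs_lt,
    ← Finset.sum_congr rfl fun j _ => abs_cell h.entry hg i j, ← Finset.sum_neg_distrib]
  constructor
  · refine Finset.sum_lt_sum (fun j _ => neg_abs_le _) ⟨j', Finset.mem_univ _, ?_⟩
    simp [hj', not_lt.mpr hge]
  · refine Finset.sum_lt_sum (fun j _ => le_abs_self _) ⟨j, Finset.mem_univ _, ?_⟩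
    simp [hj, hlt]

/-- The 1s of a row come at least in pairs. -/
lemma exists_other_one {M : Fin m → Fin n → ℤ} (h : Opt r c M) {i : Fin m} {j : Fin n}
    (hj : M i j = 1) : ∃ j', j' ≠ j ∧ M i j' = 1 := by
  by_contra! hn
  have h1 := h.row i
  rw [← Finset.add_sum_erase _ _ (Finset.mem_univ j), hj] at h1
  have h2 : (2 : ℤ) ∣ ∑ y ∈ Finset.univ.erase j, M i y := by
    refine Finset.dvd_sum fun y hy => ?_
    have := hn y (Finset.ne_of_mem_erase hy)
    rcases h.entry i y with h | h | h <;> simp_all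
  omega

lemma even_ones {M : Fin m → Fin n → ℤ} (h : Opt r c M) : (2 : ℤ) ∣ ones M := by
  have h1 : ones M + ∑ x, ∑ y, M x y = ∑ x, ∑ y, M x y * (3 - M x y) := by
    unfold ones
    rw [← Finset.sum_add_distrib]
    refine Finset.sum_congr rfl fun x _ => ?_
    rw [← Finset.sum_add_distrib]
    exact Finset.sum_congr rfl fun y _ => by ring
  have h2 : (2 : ℤ) ∣ ∑ x, ∑ y, M x y := by
    simp only [h.row]
    exact Finset.dvd_sum fun x _ => dvd_mul_right _ _
  have h3 : (2 : ℤ) ∣ ∑ x, ∑ y, M x y * (3 - M x y) := by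
    refine Finset.dvd_sum fun x _ => Finset.dvd_sum fun y _ => ?_
    rcases h.entry x y with h | h | h <;> simp [h]
  omega

/-- The smallest admissible heights: just below the lowest 2 of each column. -/
def low (M : Fin m → Fin n → ℤ) (j : Fin n) : ℕ :=
  (Finset.univ.filter fun i => M i j = 2).sup fun i => (i : ℕ) + 1

lemma low_le (M : Fin m → Fin n → ℤ) (j : Fin n) : low M j ≤ m :=
  Finset.sup_le fun i _ => i.isLt

lemma exists_two_of_lt_low {M : Fin m → Fin n → ℤ} {i : ℕ} {j : Fin n} (h : i < low M j) :
    ∃ i' : Fin m, i ≤ i' ∧ M i' j = 2 := by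
  obtain ⟨i', h1, h2⟩ := Finset.lt_sup_iff.mp h
  exact ⟨i', Nat.lt_succ_iff.mp h2, (Finset.mem_filter.mp h1).2⟩

lemma lt_low {M : Fin m → Fin n → ℤ} {i : Fin m} {j : Fin n} (h : M i j = 2) :
    (i : ℕ) < low M j :=
  Finset.le_sup (f := fun i : Fin m => (i : ℕ) + 1) (Finset.mem_filter.mpr ⟨Finset.mem_univ i, h⟩)

lemma Opt.adm_low {M : Fin m → Fin n → ℤ} (h : Opt r c M) (hr : Antitone r) : Adm M (low M) := by
  intro i j
  have he := h.entry i j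
  constructor
  · intro hlt
    obtain ⟨i', hi', h2⟩ := exists_two_of_lt_low hlt
    by_contra h0
    have h0 : M i j = 0 := by omega
    have : i ≠ i' := by rintro rfl; omega
    exact h.not_zero_two hr (lt_of_le_of_ne hi' this) h0 h2
  · intro hge
    by_contra h2
    have := lt_low (show M i j = 2 by omega)
    omega

/-- Excludes equality in the row bound: an optimal matrix with at least one 1 has admissible
heights for which the row bound is strict. -/
lemma Opt.false_of_tight {M : Fin m → Fin n → ℤ} (h : Opt r c M) (hr : Antitone r)
    (hpos : 0 < ones M)
    (ht : ∀ g : Fin n → ℕ, Adm M g → (∀ j, g j ≤ m) →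
      ones M ≤ 2 * ∑ i : Fin m, |(r i : ℤ) - conj n g ((i : ℕ) + 1)|) : False := by
  have mixed : ∀ g : Fin n → ℕ, Adm M g → (∀ j, g j ≤ m) → ∀ i j j', M i j = 1 → M i j' = 1 →
      (i : ℕ) < g j → g j' ≤ (i : ℕ) → False := fun g hg hgm i j j' h1 h2 h3 h4 =>
    absurd (two_dist_row_lt h hg h1 h2 h3 h4) (not_lt.mpr (ht g hg hgm))
  have hlow := h.adm_low hr
  -- Raising the height past a 1 keeps it admissible but switches the side of that single 1.
  have hcorner : ∀ (i : Fin m) j, (i : ℕ) = low M j → M i j = 0 := by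
    intro i j hij
    by_contra h0
    have hle := (hlow i j).2 hij.ge
    have h1 : M i j = 1 := by have := h.entry i j; omega
    obtain ⟨j', hne, h1'⟩ := exists_other_one h h1
    have hg' : Adm M (Function.update (low M) j ((i : ℕ) + 1)) := by
      intro x y
      by_cases hy : y = j
      · subst hy
        rw [Function.update_self]
        have hx := hlow x y
        refine ⟨fun hxi => ?_, fun hxi => hx.2 (by omega)⟩
        rcases eq_or_ne x i with rfl | hne
        · exact h1.ge
        · have : (x : ℕ) ≠ i := fun e => hne (Fin.ext e)
          exact hx.1 (by omega)
      · rw [Function.update_of_ne hy]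
        exact hlow x y
    have hgm' : ∀ y, Function.update (low M) j ((i : ℕ) + 1) y ≤ m := by
      intro y
      by_cases hy : y = j
      · subst hy
        rw [Function.update_self]
        exact i.isLt
      · rw [Function.update_of_ne hy]
        exact low_le M y
    by_cases hs : (i : ℕ) < low M j'
    · exact mixed _ hlow (low_le M) i j' j h1' h1 hs hij.ge
    · refine mixed _ hg' hgm' i j j' h1 h1' ?_ ?_
      · rw [Function.update_self]; omega
      · rw [Function.update_of_ne hne]; omega
  have hin : ∀ (i : Fin m) j, M i j = 1 → (i : ℕ) < low M j → ∃ i', i < i' ∧ M i' j = 2 := by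
    intro i j h1 hlt
    obtain ⟨i', hi', h2⟩ := exists_two_of_lt_low hlt
    have : i ≠ i' := by rintro rfl; omega
    exact ⟨i', lt_of_le_of_ne hi' this, h2⟩
  have hout : ∀ (i : Fin m) j, M i j = 1 → low M j ≤ (i : ℕ) → ∃ i', i' < i ∧ M i' j = 0 := by
    intro i j h1 hge
    have h0 := hcorner ⟨low M j, lt_of_le_of_lt hge i.isLt⟩ j rfl
    refine ⟨_, lt_of_le_of_ne hge ?_, h0⟩
    intro e
    rw [e] at h0
    omega
  by_cases hI : ∃ i : Fin m, ∃ j, M i j = 1 ∧ (i : ℕ) < low M j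
  · -- the lowest 1 above the heights
    obtain ⟨i, ⟨j, h1, hlt⟩, hmax⟩ := Set.Finite.exists_maximal
      (Set.toFinite {i : Fin m | ∃ j, M i j = 1 ∧ (i : ℕ) < low M j}) hI
    obtain ⟨i', hii, h2⟩ := hin i j h1 hlt
    obtain ⟨-, j', hj', hne, hO⟩ := h.exchange (j := j) (hr hii.le) (by omega)
    have hshift : ∀ x, x ≠ i → x ≠ i' → shift i i' j j' x j' = 0 := by
      intro x hx hx'; simp [shift, hx, hx']
    have e1 := h.entry i j'
    have e2 := h.entry i' j'
    rcases (by omega : M i' j' = 0 ∨ M i' j' = 1) with hz | hz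
    · have h1' : M i j' = 1 := by omega
      have hlt' : (i : ℕ) < low M j' := by
        by_contra hge
        exact mixed _ hlow (low_le M) i j j' h1 h1' hlt (not_lt.mp hge)
      obtain ⟨i₃, hi₃, h3⟩ := hin i j' h1' hlt'
      refine hO.not_zero_two hr hi₃ (j := j') ?_ ?_
      · simp [shift, hii.ne, hne.symm, h1']
      · rw [hshift i₃ hi₃.ne' (by rintro rfl; omega), h3, add_zero]
    · have hge : low M j' ≤ (i' : ℕ) := by
        by_contra hlt'
        exact absurd (hmax ⟨j', hz, not_le.mp hlt'⟩ hii.le) (not_le.mpr hii)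
      obtain ⟨i₀, hi₀, h0⟩ := hout i' j' hz hge
      refine hO.not_zero_two hr hi₀ (j := j') ?_ ?_
      · rw [hshift i₀ (by rintro rfl; omega) hi₀.ne, h0, add_zero]
      · simp [shift, hii.ne', hne.symm, hz]
  · have hall : ∀ (i : Fin m) j, M i j = 1 → low M j ≤ (i : ℕ) := by
      intro i j h1
      by_contra hlt
      exact hI ⟨i, j, h1, not_le.mp hlt⟩
    have hex : ∃ i : Fin m, ∃ j, M i j = 1 := by
      by_contra! hn
      refine hpos.ne' (Finset.sum_eq_zero fun x _ => Finset.sum_eq_zero fun y _ => ?_)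
      have := hn x y
      rcases h.entry x y with h | h | h <;> simp_all
    -- the highest 1
    obtain ⟨i, ⟨j, h1⟩, hmin⟩ := Set.Finite.exists_minimal
      (Set.toFinite {i : Fin m | ∃ j, M i j = 1}) hex
    obtain ⟨i₀, hii, h0⟩ := hout i j h1 (hall i j h1)
    obtain ⟨-, j', hj', hne, hO⟩ := h.exchange (j := j) (hr hii.le) (by omega)
    have e1 := h.entry i j'
    have e2 := h.entry i₀ j'
    rcases (by omega : M i j' = 0 ∨ M i j' = 1) with hz | hz
    · exact absurd (hmin ⟨j', by omega⟩ hii.le) (not_le.mpr hii)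
    · obtain ⟨i₁, hi₁, h0'⟩ := hout i j' hz (hall i j' hz)
      refine hO.not_zero_two hr hi₁ (j := j') ?_ ?_
      · have : i₁ ≠ i₀ := by rintro rfl; omega
        simp [shift, this, hi₁.ne, h0']
      · simp [shift, hii.ne', hne.symm, hz]

lemma exists_opt {A : Fin m → Fin n → ℤ} (hA : Sol r c A) : ∃ M, Opt r c M := by
  obtain ⟨z, ⟨A, B, hA, hB, rfl⟩, hz⟩ := Int.exists_greatest_of_bdd
    (P := fun z => ∃ A B, Sol r c A ∧ Sol r c B ∧ z = ones (fun x y => A x y + B x y))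
    ⟨∑ _x : Fin m, ∑ _y : Fin n, 1, by
      rintro z ⟨A, B, -, -, rfl⟩
      refine Finset.sum_le_sum fun x _ => Finset.sum_le_sum fun y _ => ?_
      nlinarith [sq_nonneg (A x y + B x y - 1)]⟩ ⟨_, A, A, hA, hA, rfl⟩
  exact ⟨_, ⟨A, B, hA, hB, rfl⟩, fun A' B' hA' hB' => hz _ ⟨A', B', hA', hB', rfl⟩⟩

/-! ### Matrices and finite subsets of `ℤ²` -/

/-- The embedding of matrix positions into `ℤ²`, with indices starting from 1. -/
def pos (m n : ℕ) : Fin m × Fin n ↪ ℤ × ℤ where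
  toFun p := ((p.1 : ℤ) + 1, (p.2 : ℤ) + 1)
  inj' := by
    rintro ⟨a, b⟩ ⟨a', b'⟩ h
    simp only [Prod.mk.injEq] at h
    ext <;> simp <;> omega

/-- The support of a 0/1 matrix as a subset of `ℤ²`. -/
def toSet (A : Fin m → Fin n → ℤ) : Finset (ℤ × ℤ) :=
  (Finset.univ.filter fun p : Fin m × Fin n => A p.1 p.2 = 1).map (pos m n)

lemma mem_toSet {A : Fin m → Fin n → ℤ} {p : ℤ × ℤ} :
    p ∈ toSet A ↔ ∃ x y, A x y = 1 ∧ ((x : ℤ) + 1, (y : ℤ) + 1) = p := by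
  simp only [toSet, pos, Finset.mem_map, Finset.mem_filter, Finset.mem_univ, true_and, Prod.exists]
  rfl

lemma Sol.hasLineSums {A : Fin m → Fin n → ℤ} (hA : Sol r c A) : hasLineSums (toSet A) m n r c := by
  have hrow : ∀ x, ((Finset.univ.filter fun y => A x y = 1).card : ℤ) = r x := by
    intro x
    rw [← hA.row x, Finset.card_filter]
    push_cast
    refine Finset.sum_congr rfl fun y _ => ?_
    rcases hA.entry x y with h | h <;> simp [h]
  have hcol : ∀ y, ((Finset.univ.filter fun x => A x y = 1).card : ℤ) = c y := by
    intro y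
    rw [← hA.col y, Finset.card_filter]
    push_cast
    refine Finset.sum_congr rfl fun x _ => ?_
    rcases hA.entry x y with h | h <;> simp [h]
  refine ⟨fun i => ?_, fun i hi => ?_, fun j => ?_, fun j hj => ?_⟩
  · rw [← Nat.cast_inj (R := ℤ), ← hrow i, Nat.cast_inj, rowSum]
    symm
    refine Finset.card_bij (fun y _ => ((i : ℤ) + 1, (y : ℤ) + 1)) ?_ ?_ ?_
    · intro y hy
      exact Finset.mem_filter.mpr ⟨mem_toSet.mpr ⟨i, y, (Finset.mem_filter.mp hy).2, rfl⟩, rfl⟩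
    · intro y _ y' _ h
      simp only [Prod.mk.injEq] at h
      ext; omega
    · intro p hp
      obtain ⟨hp, hpi⟩ := Finset.mem_filter.mp hp
      obtain ⟨x, y, h1, rfl⟩ := mem_toSet.mp hp
      have : x = i := by ext; simp at hpi; omega
      subst this
      exact ⟨y, by simpa using h1, rfl⟩
  · rw [rowSum, Finset.card_eq_zero, Finset.filter_eq_empty_iff]
    intro p hp
    obtain ⟨x, y, -, rfl⟩ := mem_toSet.mp hp
    exact hi x
  · rw [← Nat.cast_inj (R := ℤ), ← hcol j, Nat.cast_inj, colSum]
    symm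
    refine Finset.card_bij (fun x _ => ((x : ℤ) + 1, (j : ℤ) + 1)) ?_ ?_ ?_
    · intro x hx
      exact Finset.mem_filter.mpr ⟨mem_toSet.mpr ⟨x, j, (Finset.mem_filter.mp hx).2, rfl⟩, rfl⟩
    · intro x _ x' _ h
      simp only [Prod.mk.injEq] at h
      ext; omega
    · intro p hp
      obtain ⟨hp, hpj⟩ := Finset.mem_filter.mp hp
      obtain ⟨x, y, h1, rfl⟩ := mem_toSet.mp hp
      have : y = j := by ext; simp at hpj; omega
      subst this
      exact ⟨x, by simpa using h1, rfl⟩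
  · rw [colSum, Finset.card_eq_zero, Finset.filter_eq_empty_iff]
    intro p hp
    obtain ⟨x, y, -, rfl⟩ := mem_toSet.mp hp
    exact hj y

lemma exists_sol {F : Finset (ℤ × ℤ)} (hF : hasLineSums F m n r c) :
    ∃ A : Fin m → Fin n → ℤ, Sol r c A := by
  obtain ⟨h1, h2, h3, h4⟩ := hF
  have hx : ∀ p ∈ F, ∃ x : Fin m, (x : ℤ) + 1 = p.1 := by
    intro p hp
    by_contra! hn
    have := h2 p.1 hn
    rw [rowSum, Finset.card_eq_zero, Finset.filter_eq_empty_iff] at this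
    exact this hp rfl
  have hy : ∀ p ∈ F, ∃ y : Fin n, (y : ℤ) + 1 = p.2 := by
    intro p hp
    by_contra! hn
    have := h4 p.2 hn
    rw [colSum, Finset.card_eq_zero, Finset.filter_eq_empty_iff] at this
    exact this hp rfl
  refine ⟨fun x y => if ((x : ℤ) + 1, (y : ℤ) + 1) ∈ F then 1 else 0, fun x y => ?_, fun x => ?_,
    fun y => ?_⟩
  · split_ifs <;> simp
  · rw [← h1 x, rowSum, Finset.sum_boole, Nat.cast_inj]
    refine Finset.card_bij (fun y _ => ((x : ℤ) + 1, (y : ℤ) + 1)) ?_ ?_ ?_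
    · intro y hy
      simpa using hy
    · intro y _ y' _ h
      simp only [Prod.mk.injEq] at h
      ext; omega
    · rintro ⟨a, b⟩ hp
      obtain ⟨hp, hpi⟩ := Finset.mem_filter.mp hp
      obtain ⟨y, hy⟩ := hy _ hp
      simp only at hpi hy
      subst hpi hy
      exact ⟨y, by simpa using hp, rfl⟩
  · rw [← h3 y, colSum, Finset.sum_boole, Nat.cast_inj]
    refine Finset.card_bij (fun x _ => ((x : ℤ) + 1, (y : ℤ) + 1)) ?_ ?_ ?_
    · intro y hy
      simpa using hy
    · intro y _ y' _ h
      simp only [Prod.mk.injEq] at h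
      ext; omega
    · rintro ⟨a, b⟩ hp
      obtain ⟨hp, hpi⟩ := Finset.mem_filter.mp hp
      obtain ⟨x, hx⟩ := hx _ hp
      simp only at hpi hx
      subst hpi hx
      exact ⟨x, by simpa using hp, rfl⟩

lemma card_symmDiff {A B : Fin m → Fin n → ℤ} (hA : Sol r c A) (hB : Sol r c B) :
    (((toSet A \ toSet B) ∪ (toSet B \ toSet A)).card : ℤ) = ones (fun x y => A x y + B x y) := by
  have : (toSet A \ toSet B) ∪ (toSet B \ toSet A) =
      (Finset.univ.filter fun p : Fin m × Fin n => A p.1 p.2 ≠ B p.1 p.2).map (pos m n) := by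
    simp only [toSet, ← Finset.map_sdiff, ← Finset.map_union]
    congr 1
    ext ⟨x, y⟩
    have := hA.entry x y
    have := hB.entry x y
    simp only [Finset.mem_union, Finset.mem_sdiff, Finset.mem_filter, Finset.mem_univ, true_and]
    omega
  rw [this, Finset.card_map, Finset.card_filter, ones, ← Finset.univ_product_univ,
    Finset.sum_product]
  push_cast
  refine Finset.sum_congr rfl fun x _ => Finset.sum_congr rfl fun y _ => ?_
  rcases hA.entry x y with h | h <;> rcases hB.entry x y with h' | h' <;> simp [h, h']

theorem stmt10 (m n α : ℕ) (r : Fin m → ℕ) (c : Fin n → ℕ)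
    (hr : Antitone r) (hc : Antitone c)
    (hcons : ∃ F : Finset (ℤ × ℤ), hasLineSums F m n r c)
    (hα : 2 * α = ∑ j : Fin n, ((c j : ℤ) - (conj m r ((j : ℕ) + 1) : ℤ)).natAbs)
    (hα1 : 1 ≤ α) :
    ∃ F₂ F₃ : Finset (ℤ × ℤ), hasLineSums F₂ m n r c ∧ hasLineSums F₃ m n r c ∧
      2 * α + 2 ≤ ((F₂ \ F₃) ∪ (F₃ \ F₂)).card := by
  obtain ⟨F, hF⟩ := hcons
  obtain ⟨A₀, hA₀⟩ := exists_sol hF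
  have hm : ∀ j, c j ≤ m := by
    intro j
    have h1 : ∑ x, A₀ x j ≤ ∑ _x : Fin m, 1 :=
      Finset.sum_le_sum fun x _ => by have := hA₀.entry x j; omega
    rw [hA₀.col] at h1
    simpa using h1
  obtain ⟨M, hM⟩ := exists_opt hA₀
  have hα' : 2 * (α : ℤ) = ∑ j : Fin n, |(c j : ℤ) - conj m r ((j : ℕ) + 1)| := by
    have := congrArg (Nat.cast : ℕ → ℤ) hα
    push_cast at this
    exact this
  have hge : 2 * (α : ℤ) ≤ ones M := by
    have h1 := dist_le m n r c hc hm (low M)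
    have h2 := two_dist_row_le hM (hM.adm_low hr)
    have h3 := two_dist_col_le hM (hM.adm_low hr) (low_le M)
    linarith
  have hne : ones M ≠ 2 * α := by
    intro he
    refine hM.false_of_tight hr (by omega) fun g hg hgm => ?_
    have h1 := dist_le m n r c hc hm g
    have h3 := two_dist_col_le hM hg hgm
    linarith
  have hev := even_ones hM
  obtain ⟨⟨A, B, hA, hB, rfl⟩, -⟩ := hM
  refine ⟨toSet A, toSet B, hA.hasLineSums, hB.hasLineSums, ?_⟩
  have := card_symmDiff hA hB
  omega
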